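/- arXiv:1804.02587 — 6 statements merged into one kernel-verified Lean document; each statement's English description precedes it below -/
import Mathlib

section
/- Let K be a linearly ordered field with a non-archimedean multiplicative absolute value |·| : K → ℝ satisfying |x+y| = max(|x|,|y|) whenever x ≥ 0 and y ≥ 0. Let d ≥ 1 and let M = (m_{ij}) be a d×d matrix over K with det M ≠ 0, with m_{ii} = 1 for all i, and with |det M| = 1. Define I_M = {x ∈ ℝ^d : x_1+⋯+x_d = 1, and for all 1 ≤ i < j ≤ d, |m_{ij}| ≤ e^{x_i−x_j} and |m_{ji}| ≤ e^{x_j−x_i}} and I⁺_M = {x ∈ ℝ^d : x_1+⋯+x_d = 1, and for all 1 ≤ i < d, |m_{i,i+1}| ≤ e^{x_i−x_{i+1}} and |m_{i+1,i}| ≤ e^{x_{i+1}−x_i}}. If M is totally nonnegative, then I_M = I⁺_M. -/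
/-!
For `i < k < j`, the minors of `M` on rows `{i, k}`, columns `{k, j}` and on rows `{k, j}`,
columns `{i, k}` give `m_ij m_kk ≤ m_ik m_kj` and `m_ji m_kk ≤ m_jk m_ki`. As `m_kk = 1` and the
absolute value is monotone on nonnegative elements, `|m_ij| ≤ |m_ik| |m_kj|`, and likewise below
the diagonal. Since `e^{x_i - x_j} = e^{x_i - x_k} e^{x_k - x_j}`, the bounds for consecutive
indices multiply along the chain from `i` to `j`.
-/

noncomputable section

/-- Total nonnegativity of a matrix over a linearly ordered field: all minors
are nonnegative. -/
def TotNonneg {K : Type*} [Field K] [LinearOrder K] [IsStrictOrderedRing K] {d : ℕ}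
    (M : Matrix (Fin d) (Fin d) K) : Prop :=
  ∀ (k : ℕ) (f g : Fin k → Fin d), StrictMono f → StrictMono g →
    0 ≤ (M.submatrix f g).det

open Matrix

section OrderTwo

variable {ι κ R : Type*} [Preorder ι] [Preorder κ] [CommSemiring R] [PartialOrder R]

/-- Total nonnegativity of order two: all minors of size at most two are nonnegative. The `2 × 2`
minors are expressed without subtraction, so that the notion makes sense over a semiring. -/
structure IsTotNonnegTwo (M : Matrix ι κ R) : Prop where
  nonneg : ∀ i j, 0 ≤ M i j
  mul_le_mul : ∀ ⦃i k⦄, i < k → ∀ ⦃j l⦄, j < l → M i l * M k j ≤ M i j * M k l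

theorem IsTotNonnegTwo.transpose {M : Matrix ι κ R} (hM : IsTotNonnegTwo M) :
    IsTotNonnegTwo Mᵀ where
  nonneg i j := hM.nonneg j i
  mul_le_mul i k hik j l hjl := by
    simpa only [transpose_apply, mul_comm (M l i)] using hM.mul_le_mul hjl hik

theorem IsTotNonnegTwo.apply_le_mul [IsOrderedRing R] {M : Matrix ι ι R}
    (hM : IsTotNonnegTwo M) (hdiag : ∀ i, 1 ≤ M i i) {i k j : ι} (hik : i < k) (hkj : k < j) :
    M i j ≤ M i k * M k j :=
  calc
    M i j ≤ M i j * M k k := le_mul_of_one_le_right (hM.nonneg i j) (hdiag k)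
    _ ≤ M i k * M k j := hM.mul_le_mul hik hkj

end OrderTwo

theorem TotNonneg.isTotNonnegTwo {K : Type*} [Field K] [LinearOrder K] [IsStrictOrderedRing K]
    {d : ℕ} {M : Matrix (Fin d) (Fin d) K} (hM : TotNonneg M) : IsTotNonnegTwo M where
  nonneg i j := by
    simpa only [det_fin_one, submatrix_apply, cons_val_fin_one] using
      hM 1 ![i] ![j] strictMono_vecEmpty strictMono_vecEmpty
  mul_le_mul i k hik j l hjl := by
    have hminor : 0 ≤ (M.submatrix ![i, k] ![j, l]).det :=
      hM 2 _ _ (strictMono_vecEmpty.vecCons hik) (strictMono_vecEmpty.vecCons hjl)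
    rw [det_fin_two] at hminor
    exact sub_nonneg.1 hminor

theorem monotoneOn_Ici_zero_of_add_eq_max {G β : Type*} [AddCommGroup G] [PartialOrder G]
    [IsOrderedAddMonoid G] [LinearOrder β] {f : G → β}
    (hf : ∀ x y, 0 ≤ x → 0 ≤ y → f (x + y) = max (f x) (f y)) :
    MonotoneOn f (Set.Ici 0) := fun a ha b _ hab =>
  calc
    f a ≤ max (f a) (f (b - a)) := le_max_left _ _
    _ = f (a + (b - a)) := (hf a (b - a) ha (sub_nonneg.2 hab)).symm
    _ = f b := by rw [add_sub_cancel]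

section LocallyFinite

variable {ι : Type*} [Preorder ι] [LocallyFiniteOrder ι]

theorem rel_of_lt_of_forall_covBy {r : ι → ι → Prop}
    (htrans : ∀ ⦃i k j⦄, i < k → k < j → r i k → r k j → r i j)
    (hcov : ∀ ⦃i j⦄, i ⋖ j → r i j) {i j : ι} (hij : i < j) : r i j := by
  induction lt_iff_transGen_covBy.1 hij with
  | single h => exact hcov h
  | tail hik hkj ih =>
    have hik := lt_iff_transGen_covBy.2 hik
    exact htrans hik hkj.lt (ih hik) (hcov hkj)

theorem le_exp_sub_of_forall_covBy {w : ι → ι → ℝ} (hw₀ : ∀ i j, 0 ≤ w i j)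
    (hw : ∀ ⦃i k j⦄, i < k → k < j → w i j ≤ w i k * w k j) {x : ι → ℝ}
    (hcov : ∀ ⦃i j⦄, i ⋖ j → w i j ≤ Real.exp (x i - x j)) {i j : ι} (hij : i < j) :
    w i j ≤ Real.exp (x i - x j) := by
  refine rel_of_lt_of_forall_covBy (r := fun i j => w i j ≤ Real.exp (x i - x j))
    (fun i k j hik hkj hwik hwkj => ?_) hcov hij
  calc
    w i j ≤ w i k * w k j := hw hik hkj
    _ ≤ Real.exp (x i - x k) * Real.exp (x k - x j) :=
      mul_le_mul hwik hwkj (hw₀ k j) (Real.exp_pos _).le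
    _ = Real.exp (x i - x j) := by rw [← Real.exp_add, sub_add_sub_cancel]

variable {R : Type*} [CommSemiring R] [PartialOrder R] [IsOrderedRing R]

theorem IsTotNonnegTwo.abv_le_exp_sub_of_forall_covBy {abv : R → ℝ} (hnonneg : ∀ a, 0 ≤ abv a)
    (hmul : ∀ a b, abv (a * b) ≤ abv a * abv b) (hmono : MonotoneOn abv (Set.Ici 0))
    {M : Matrix ι ι R} (hM : IsTotNonnegTwo M) (hdiag : ∀ i, 1 ≤ M i i) {x : ι → ℝ}
    (hcov : ∀ ⦃i j⦄, i ⋖ j → abv (M i j) ≤ Real.exp (x i - x j)) {i j : ι} (hij : i < j) :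
    abv (M i j) ≤ Real.exp (x i - x j) := by
  refine le_exp_sub_of_forall_covBy (w := fun i j => abv (M i j)) (fun i j => hnonneg _)
    (fun i k j hik hkj => ?_) hcov hij
  calc
    abv (M i j) ≤ abv (M i k * M k j) :=
      hmono (hM.nonneg i j) (mul_nonneg (hM.nonneg i k) (hM.nonneg k j))
        (hM.apply_le_mul hdiag hik hkj)
    _ ≤ abv (M i k) * abv (M k j) := hmul _ _

theorem stmt0_general {abv : R → ℝ} (hnonneg : ∀ a, 0 ≤ abv a)
    (hmul : ∀ a b, abv (a * b) ≤ abv a * abv b) (hmono : MonotoneOn abv (Set.Ici 0))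
    {M : Matrix ι ι R} (hM : IsTotNonnegTwo M) (hdiag : ∀ i, 1 ≤ M i i) (x : ι → ℝ) :
    (∀ i j, i < j →
        abv (M i j) ≤ Real.exp (x i - x j) ∧ abv (M j i) ≤ Real.exp (x j - x i)) ↔
      ∀ i j, i ⋖ j →
        abv (M i j) ≤ Real.exp (x i - x j) ∧ abv (M j i) ≤ Real.exp (x j - x i) := by
  refine ⟨fun h i j hij => h i j hij.lt, fun h i j hij => ⟨?_, ?_⟩⟩
  · exact hM.abv_le_exp_sub_of_forall_covBy hnonneg hmul hmono hdiag
      (fun i j hij => (h i j hij).1) hij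
  · -- Transposing `M` and negating `x` exchanges the two inequalities.
    rw [← neg_sub_neg]
    exact hM.transpose.abv_le_exp_sub_of_forall_covBy (x := -x) hnonneg hmul hmono hdiag
      (fun i j hij => (h i j hij).2.trans_eq (by rw [Pi.neg_apply, Pi.neg_apply, neg_sub_neg])) hij

end LocallyFinite

/-- Proposition 4.6 (positive intersection): for a totally nonnegative matrix `M`
with unit diagonal, nonzero determinant of absolute value one, the set `I_M` cut
out by all the inequalities `-v(m_ij) ≤ x_i - x_j ≤ v(m_ji)` (written
multiplicatively via the absolute value `|·| = e^{-v(·)}`) coincides with the set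
`I⁺_M` cut out by the inequalities for consecutive indices only. -/
theorem stmt0 {K : Type*} [Field K] [LinearOrder K] [IsStrictOrderedRing K] (abv : K → ℝ)
    (habs0 : ∀ x : K, 0 ≤ abv x)
    (habs1 : ∀ x : K, abv x = 0 ↔ x = 0)
    (habs2 : ∀ x y : K, abv (x * y) = abv x * abv y)
    (habs3 : ∀ x y : K, abv (x + y) ≤ max (abv x) (abv y))
    (hposmax : ∀ x y : K, 0 ≤ x → 0 ≤ y → abv (x + y) = max (abv x) (abv y))
    (d : ℕ) (hd : 1 ≤ d) (M : Matrix (Fin d) (Fin d) K)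
    (hdet : M.det ≠ 0) (hdiag : ∀ i, M i i = 1) (habsdet : abv M.det = 1)
    (htn : TotNonneg M) :
    {x : Fin d → ℝ | (∑ i, x i) = 1 ∧ ∀ i j : Fin d, i < j →
        abv (M i j) ≤ Real.exp (x i - x j) ∧ abv (M j i) ≤ Real.exp (x j - x i)} =
    {x : Fin d → ℝ | (∑ i, x i) = 1 ∧ ∀ i j : Fin d, (j : ℕ) = (i : ℕ) + 1 →
        abv (M i j) ≤ Real.exp (x i - x j) ∧ abv (M j i) ≤ Real.exp (x j - x i)} := by
  refine Set.ext fun x => and_congr_right fun _ => ?_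
  simpa only [Fin.covBy_iff, Nat.covBy_iff_add_one_eq, eq_comm (a := _ + 1)] using
    stmt0_general habs0 (fun a b => (habs2 a b).le) (monotoneOn_Ici_zero_of_add_eq_max hposmax)
      htn.isTotNonnegTwo (fun i => (hdiag i).ge) x
end
end

section
/- Let K be a linearly ordered field with a non-archimedean multiplicative absolute value |·| : K → ℝ satisfying |x+y| = max(|x|,|y|) whenever x ≥ 0 and y ≥ 0. Let A = (a_{ij}) and B = (b_{ij}) be totally nonnegative d×d matrices over K with det A ≠ 0 and det B ≠ 0, such that A is upper triangular and B is triangular (upper or lower). Let C = AB = (c_{ij}), and assume that |det C| = max over all permutations σ of {1,…,d} of |c_{σ(1)1}·c_{σ(2)2}⋯c_{σ(d)d}|. Then |det C| = |c_{11}·c_{22}⋯c_{dd}|, and for every 1 ≤ i < d one has |c_{i,i+1}|·|a_{i+1,i+1}| ≥ |a_{i,i+1}|·|c_{i+1,i+1}|. -/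
noncomputable section

/-! Write `C = A * B`. The entries of `A` and `B` are nonnegative and `|·|` is monotone on
nonnegative elements, so no cancellation occurs in `C` and `|a_{ik} b_{kj}| ≤ |c_{ij}|`. The
determinants of `A` and `B` are the products of their diagonals, so
`∏ |c_{ii}| ≤ |det C| = ∏ |a_{ii} b_{ii}|` forces equality in every `|a_{ii} b_{ii}| ≤ |c_{ii}|`.
Multiplying `|a_{ij} b_{jj}| ≤ |c_{ij}|` by `|a_{jj}|` and replacing `|a_{jj} b_{jj}|` by `|c_{jj}|`
gives the inequality for the off-diagonal entries. -/

theorem TotNonneg.apply_nonneg {K : Type*} [Field K] [LinearOrder K] [IsStrictOrderedRing K]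
    {d : ℕ} {M : Matrix (Fin d) (Fin d) K} (hM : TotNonneg M) (i j : Fin d) : 0 ≤ M i j := by
  simpa only [Matrix.det_fin_one, Matrix.submatrix_apply] using
    hM 1 (fun _ => i) (fun _ => j) (Subsingleton.strictMono _) (Subsingleton.strictMono _)

theorem monotoneOn_Ici_zero_of_map_add_eq_max {G α : Type*} [AddCommGroup G] [PartialOrder G]
    [IsOrderedAddMonoid G] [LinearOrder α] {f : G → α}
    (hf : ∀ x y, 0 ≤ x → 0 ≤ y → f (x + y) = max (f x) (f y)) : MonotoneOn f (Set.Ici 0) := by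
  intro x hx y _ hxy
  calc
    f x ≤ max (f x) (f (y - x)) := le_max_left _ _
    _ = f (x + (y - x)) := (hf x (y - x) hx (sub_nonneg.2 hxy)).symm
    _ = f y := by rw [add_sub_cancel]

theorem eq_of_le_of_prod_le_prod {ι S : Type*} [CommMonoidWithZero S] [PartialOrder S]
    [ZeroLEOneClass S] [PosMulStrictMono S] [Nontrivial S] {s : Finset ι} {f g : ι → S}
    (hpos : ∀ i ∈ s, 0 < f i) (hle : ∀ i ∈ s, f i ≤ g i)
    (hprod : ∏ i ∈ s, g i ≤ ∏ i ∈ s, f i) {i : ι} (hi : i ∈ s) : f i = g i := by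
  by_contra hne
  exact (Finset.prod_lt_prod hpos hle ⟨i, hi, (hle i hi).lt_of_ne hne⟩).not_ge hprod

theorem apply_mul_apply_le_matrix_mul_apply {l m n R : Type*} [Fintype m] [Semiring R]
    [PartialOrder R] [IsOrderedRing R] {A : Matrix l m R} {B : Matrix m n R}
    (hA : ∀ i k, 0 ≤ A i k) (hB : ∀ k j, 0 ≤ B k j) (i : l) (k : m) (j : n) :
    A i k * B k j ≤ (A * B) i j :=
  Finset.single_le_sum (f := fun k => A i k * B k j)
    (fun k _ => mul_nonneg (hA i k) (hB k j)) (Finset.mem_univ k)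

theorem det_eq_prod_diag_of_triangular {n R : Type*} [Fintype n] [LinearOrder n] [CommRing R]
    {M : Matrix n n R} (hM : (∀ i j, j < i → M i j = 0) ∨ (∀ i j, i < j → M i j = 0)) :
    M.det = ∏ i, M i i := by
  rcases hM with hupper | hlower
  · exact Matrix.det_of_isUpperTriangular fun i j => hupper i j
  · exact Matrix.det_of_isLowerTriangular M fun i j => hlower i j

theorem map_nonneg_of_monotoneOn_Ici_zero {F R S : Type*} [Zero R] [Preorder R] [Zero S]
    [Preorder S] [FunLike F R S] [ZeroHomClass F R S] {f : F} (hf : MonotoneOn f (Set.Ici 0))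
    {x : R} (hx : 0 ≤ x) : 0 ≤ f x := by
  simpa only [map_zero] using hf Set.self_mem_Ici hx hx

theorem map_apply_mul_map_apply_le_map_matrix_mul_apply {F l m n R S : Type*} [Fintype m]
    [Semiring R] [PartialOrder R] [IsOrderedRing R] [Mul S] [Preorder S] [FunLike F R S]
    [MulHomClass F R S] {f : F} (hf : MonotoneOn f (Set.Ici 0)) {A : Matrix l m R}
    {B : Matrix m n R} (hA : ∀ i k, 0 ≤ A i k) (hB : ∀ k j, 0 ≤ B k j) (i : l) (k : m) (j : n) :
    f (A i k) * f (B k j) ≤ f ((A * B) i j) := by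
  have hterm : 0 ≤ A i k * B k j := mul_nonneg (hA i k) (hB k j)
  have hle : A i k * B k j ≤ (A * B) i j := apply_mul_apply_le_matrix_mul_apply hA hB i k j
  simpa only [map_mul] using hf hterm (hterm.trans hle) hle

section MonotoneHom

variable {n R S : Type*} [Fintype n] [CommMonoidWithZero S] [PartialOrder S] [ZeroLEOneClass S]
  [PosMulStrictMono S] [Nontrivial S]

theorem map_matrix_mul_diag_eq_of_map_prod_le [CommSemiring R] [PartialOrder R] [IsOrderedRing R]
    {f : R →*₀ S} (hf : MonotoneOn f (Set.Ici 0)) {A B : Matrix n n R}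
    (hA : ∀ i j, 0 ≤ A i j) (hB : ∀ i j, 0 ≤ B i j) (hne : f (∏ i, A i i * B i i) ≠ 0)
    (hle : f (∏ i, (A * B) i i) ≤ f (∏ i, A i i * B i i)) (i : n) :
    f ((A * B) i i) = f (A i i) * f (B i i) := by
  have hpos (j : n) : 0 < f (A j j) * f (B j j) := by
    rw [← map_mul]
    have hfactor : f (A j j * B j j) ≠ 0 :=
      fun hzero => hne (by rw [map_prod, Finset.prod_eq_zero (Finset.mem_univ j) hzero])
    exact (map_nonneg_of_monotoneOn_Ici_zero hf (mul_nonneg (hA j j) (hB j j))).lt_of_ne' hfactor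
  simp only [map_prod, map_mul] at hle
  exact (eq_of_le_of_prod_le_prod (fun j _ => hpos j)
    (fun j _ => map_apply_mul_map_apply_le_map_matrix_mul_apply hf hA hB j j j) hle
    (Finset.mem_univ i)).symm

theorem stmt2_general [DecidableEq n] [CommRing R] [PartialOrder R] [IsOrderedRing R]
    {f : R →*₀ S} (hf : MonotoneOn f (Set.Ici 0)) {A B : Matrix n n R}
    (hA : ∀ i j, 0 ≤ A i j) (hB : ∀ i j, 0 ≤ B i j)
    (hdetA : A.det = ∏ i, A i i) (hdetB : B.det = ∏ i, B i i) (hne : f (A * B).det ≠ 0)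
    (hle : f (∏ i, (A * B) i i) ≤ f (A * B).det) :
    f (A * B).det = f (∏ i, (A * B) i i) ∧
      ∀ i j, f (A i j) * f ((A * B) j j) ≤ f ((A * B) i j) * f (A j j) := by
  have hdet : (A * B).det = ∏ i, A i i * B i i := by
    rw [Matrix.det_mul, hdetA, hdetB, Finset.prod_mul_distrib]
  rw [hdet] at hne hle ⊢
  have hdiag (i : n) : f ((A * B) i i) = f (A i i) * f (B i i) :=
    map_matrix_mul_diag_eq_of_map_prod_le hf hA hB hne hle i
  refine ⟨by simp only [map_prod, map_mul, hdiag], fun i j => ?_⟩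
  calc
    f (A i j) * f ((A * B) j j) = f (A j j) * (f (A i j) * f (B j j)) := by
      rw [hdiag, mul_left_comm]
    _ ≤ f (A j j) * f ((A * B) i j) := mul_le_mul_of_nonneg_left
      (map_apply_mul_map_apply_le_map_matrix_mul_apply hf hA hB i j j)
      (map_nonneg_of_monotoneOn_Ici_zero hf (hA j j))
    _ = f ((A * B) i j) * f (A j j) := mul_comm _ _

end MonotoneHom

/-- Lemma 5.2 (monotonicity lemma): if `A`, `B` are totally nonnegative
invertible matrices with `A` upper triangular and `B` triangular, and
`C = A * B` satisfies `|det C| = max_σ |c_{σ(1)1} ⋯ c_{σ(d)d}|`, then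
`|det C| = |c_{11} ⋯ c_{dd}|` and `|c_{i,i+1}|·|a_{i+1,i+1}| ≥
|a_{i,i+1}|·|c_{i+1,i+1}|` for all `i` (i.e. `v(c_{i,i+1}/c_{i+1,i+1}) ≤
v(a_{i,i+1}/a_{i+1,i+1})`). -/
theorem stmt2 {K : Type*} [Field K] [LinearOrder K] [IsStrictOrderedRing K] (abv : K → ℝ)
    (habs0 : ∀ x : K, 0 ≤ abv x)
    (habs1 : ∀ x : K, abv x = 0 ↔ x = 0)
    (habs2 : ∀ x y : K, abv (x * y) = abv x * abv y)
    (habs3 : ∀ x y : K, abv (x + y) ≤ max (abv x) (abv y))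
    (hposmax : ∀ x y : K, 0 ≤ x → 0 ≤ y → abv (x + y) = max (abv x) (abv y))
    (d : ℕ) (A B C : Matrix (Fin d) (Fin d) K)
    (htnA : TotNonneg A) (htnB : TotNonneg B)
    (hdetA : A.det ≠ 0) (hdetB : B.det ≠ 0)
    (hAupper : ∀ i j : Fin d, j < i → A i j = 0)
    (hBtri : (∀ i j : Fin d, j < i → B i j = 0) ∨ (∀ i j : Fin d, i < j → B i j = 0))
    (hC : C = A * B)
    (hmax : IsGreatest
      (Set.range fun σ : Equiv.Perm (Fin d) => abv (∏ i, C (σ i) i))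
      (abv C.det)) :
    abv C.det = abv (∏ i, C i i) ∧
    ∀ i j : Fin d, (j : ℕ) = (i : ℕ) + 1 →
      abv (A i j) * abv (C j j) ≤ abv (C i j) * abv (A j j) := by
  subst hC
  let v : AbsoluteValue K ℝ :=
    ⟨⟨abv, habs2⟩, habs0, habs1, fun _ _ => IsNonarchimedean.add_le habs0 habs3⟩
  have hdet : (A * B).det ≠ 0 := A.det_mul B ▸ mul_ne_zero hdetA hdetB
  have h := stmt2_general (f := v.toMonoidWithZeroHom)
    (monotoneOn_Ici_zero_of_map_add_eq_max hposmax) htnA.apply_nonneg htnB.apply_nonneg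
    (det_eq_prod_diag_of_triangular (.inl hAupper)) (det_eq_prod_diag_of_triangular hBtri)
    (v.ne_zero hdet) (hmax.2 ⟨1, rfl⟩)
  exact ⟨h.1, fun i j _ => h.2 i j⟩
end
end

section
/- Let (E,F,G) be a triple of flags in ℝ^d with the maximum span property, and let u_1 be a nonzero linear functional on ℝ^d vanishing on E^(d−1). Then there exists a unique sequence (u_2,…,u_d) of linear functionals on ℝ^d such that for every 2 ≤ i ≤ d, u_i vanishes on E^(d−i) + G^(i−1) and u_{i−1} + u_i vanishes on F^(1). Moreover each u_i is nonzero and (u_1,…,u_d) is a basis of the dual space (ℝ^d)^*. -/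
noncomputable section

abbrev Vec (d : ℕ) : Type := Fin d → ℝ

/-- A complete flag in `ℝ^d`. -/
def IsFlag {d : ℕ} (F : ℕ → Submodule ℝ (Vec d)) : Prop :=
  Monotone F ∧ ∀ i, i ≤ d → Module.finrank ℝ (F i) = i

/-- The maximum span property for a tuple of flags. -/
def MaxSpan {d t : ℕ} (F : Fin t → ℕ → Submodule ℝ (Vec d)) : Prop :=
  ∀ a : Fin t → ℕ, (∀ j, a j ≤ d) →
    Module.finrank ℝ ↥(⨆ j, F j (a j)) = min (∑ j, a j) d

/-- The snake condition for a putative snake basis `(u_1, …, u_d)` associated to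
the bottom snake of a maximum span triple `(E,F,G)`: for `2 ≤ i ≤ d`, `u_i`
vanishes on `E^(d-i) + G^(i-1)` and `u_{i-1} + u_i` vanishes on `F^(1)`. -/
def SnakeCond {d : ℕ} (E F G : ℕ → Submodule ℝ (Vec d))
    (u : ℕ → Module.Dual ℝ (Vec d)) : Prop :=
  ∀ i, 2 ≤ i → i ≤ d →
    (∀ v ∈ E (d - i) ⊔ G (i - 1), u i v = 0) ∧
    (∀ v ∈ F 1, (u (i - 1) + u i) v = 0)

/-!
Put `W i = E (d - i) ⊔ G (i - 1)`. By maximum span each `W i` with `1 ≤ i ≤ d` is a hyperplane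
complementary to the line `F 1`, so a functional is determined by its restrictions to `F 1` and
`W i`, and these can be prescribed freely. The snake condition fixes both restrictions of `u i` in
terms of `u (i - 1)`; this gives existence, uniqueness and, going backwards, `u i ≠ 0`.
For independence, `u i` vanishes on `G (i - 1)` but not on `G i`, because `E (d - i) ⊔ G i = ⊤`:
the `u i` are triangular with respect to the filtration by annihilators of the `G i`.
-/

open Module

theorem isCompl_of_codisjoint_of_finrank_add_le {K V : Type*} [DivisionRing K] [AddCommGroup V]
    [Module K V] [FiniteDimensional K V] {s t : Submodule K V} (hst : Codisjoint s t)
    (h : finrank K s + finrank K t ≤ finrank K V) : IsCompl s t := by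
  have hdim := Submodule.finrank_sup_add_finrank_inf_eq s t
  rw [hst.eq_top, finrank_top] at hdim
  exact ⟨disjoint_iff.2 (Submodule.finrank_eq_zero.1 (by omega)), hst⟩

theorem linearIndependent_of_mem_of_notMem {ι K V : Type*} [LinearOrder ι] [DivisionRing K]
    [AddCommGroup V] [Module K V] {v : ι → V} (D : ι → Submodule K V)
    (hmem : ∀ i j, i < j → v j ∈ D i) (hnotMem : ∀ i, v i ∉ D i) : LinearIndependent K v := by
  refine linearIndependent_iff_finset_linearIndependent.2 fun s ↦ ?_
  change LinearIndepOn K v (s : Set ι)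
  induction s using Finset.induction_on_min with
  | empty => simp
  | insert a s ha ih =>
    have hspan : Submodule.span K (v '' s) ≤ D a :=
      Submodule.span_le.2 <| Set.image_subset_iff.2 fun j hj ↦ hmem a j (ha j hj)
    rw [Finset.coe_insert, linearIndepOn_insert fun has ↦ (ha a has).false]
    exact ⟨ih, fun hva ↦ hnotMem a (hspan hva)⟩

section Snake

variable {R M : Type*} [CommRing R] [AddCommGroup M] [Module R M]

theorem exists_dual_eq_zero_and_add_eq_zero {L W : Submodule R M} (hLW : IsCompl L W)
    (φ : Dual R M) :
    ∃ ψ : Dual R M, (∀ v ∈ W, ψ v = 0) ∧ ∀ v ∈ L, (φ + ψ) v = 0 := by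
  refine ⟨-(φ ∘ₗ L.projection W hLW), fun v hv ↦ ?_, fun v hv ↦ ?_⟩
  · simp [Submodule.projection_apply_of_mem_right hLW hv]
  · simp [Submodule.projection_apply_of_mem_left hLW hv]

/-- The snake condition relative to a submodule `L` and a sequence of submodules `W`: each `u i`
vanishes on `W i`, and consecutive terms are opposite on `L`. As in `SnakeCond`, which is the case
`L = F 1` and `W i = E (d - i) ⊔ G (i - 1)`, only the indices `2 ≤ i ≤ d` are constrained. -/
def IsSnake (L : Submodule R M) (W : ℕ → Submodule R M) (d : ℕ) (u : ℕ → Dual R M) : Prop :=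
  ∀ i, 2 ≤ i → i ≤ d → (∀ v ∈ W i, u i v = 0) ∧ ∀ v ∈ L, (u (i - 1) + u i) v = 0

namespace IsSnake

variable {L : Submodule R M} {W : ℕ → Submodule R M} {d : ℕ} {u u' : ℕ → Dual R M}

theorem exists_of_isCompl (hW : ∀ i, 2 ≤ i → i ≤ d → IsCompl L (W i)) (u₁ : Dual R M) :
    ∃ u, u 1 = u₁ ∧ IsSnake L W d u := by
  choose! next hnextW hnextL using fun i hi hid ↦
    exists_dual_eq_zero_and_add_eq_zero (hW i hi hid)
  refine ⟨fun i ↦ Nat.rec u₁ (fun k φ ↦ next (k + 2) φ) (i - 1), rfl, fun i hi hid ↦ ?_⟩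
  obtain ⟨k, rfl⟩ := Nat.exists_eq_add_of_le' hi
  exact ⟨hnextW _ hi hid _, hnextL _ hi hid _⟩

theorem eq_of_codisjoint (hW : ∀ i, 2 ≤ i → i ≤ d → Codisjoint L (W i))
    (hu : IsSnake L W d u) (hu' : IsSnake L W d u') (h₁ : u 1 = u' 1) {i : ℕ} (hi : 1 ≤ i)
    (hid : i ≤ d) : u i = u' i := by
  induction i, hi using Nat.le_induction with
  | base => exact h₁
  | succ i hi ih =>
    obtain ⟨huW, huL⟩ := hu (i + 1) (by omega) hid
    obtain ⟨huW', huL'⟩ := hu' (i + 1) (by omega) hid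
    refine LinearMap.ext_on_codisjoint (hW (i + 1) (by omega) hid) (fun v hv ↦ ?_)
      fun v hv ↦ (huW v hv).trans (huW' v hv).symm
    have hsum : u i v + u (i + 1) v = u' i v + u' (i + 1) v :=
      (huL v hv).trans (huL' v hv).symm
    rwa [ih (by omega), add_right_inj] at hsum

theorem apply_eq_zero (hu : IsSnake L W d u) (h₁ : ∀ v ∈ W 1, u 1 v = 0) {i : ℕ} (hi : 1 ≤ i)
    (hid : i ≤ d) : ∀ v ∈ W i, u i v = 0 := by
  obtain rfl | hi := hi.eq_or_lt
  · exact h₁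
  · exact (hu i hi hid).1

theorem ne_zero (hW : ∀ i, 1 ≤ i → i ≤ d → Codisjoint L (W i)) (hu : IsSnake L W d u)
    (h₁ : ∀ v ∈ W 1, u 1 v = 0) (hne : u 1 ≠ 0) {i : ℕ} (hi : 1 ≤ i) (hid : i ≤ d) :
    u i ≠ 0 := by
  induction i, hi using Nat.le_induction with
  | base => exact hne
  | succ i hi ih =>
    intro hzero
    have huL : ∀ v ∈ L, u i v = 0 := by
      simpa [hzero] using (hu (i + 1) (by omega) hid).2
    exact ih (by omega) <| LinearMap.ext_on_codisjoint (g := 0) (hW i hi (by omega)) huL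
      (hu.apply_eq_zero h₁ hi (by omega))

end IsSnake

end Snake

section Field

variable {K V : Type*} [Field K] [AddCommGroup V] [Module K V]

theorem linearIndependent_of_eq_zero_on_sup {d : ℕ} {E G : ℕ → Submodule K V} (hG : Monotone G)
    (hEG : ∀ i, 1 ≤ i → i ≤ d → Codisjoint (E (d - i)) (G i)) {u : ℕ → Dual K V}
    (hne : ∀ i, 1 ≤ i → i ≤ d → u i ≠ 0)
    (hu : ∀ i, 1 ≤ i → i ≤ d → ∀ v ∈ E (d - i) ⊔ G (i - 1), u i v = 0) :
    LinearIndependent K fun i : Fin d ↦ u (i + 1) := by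
  refine linearIndependent_of_mem_of_notMem (fun i : Fin d ↦ (G (i + 1)).dualAnnihilator)
    (fun i j hij ↦ ?_) fun i hi ↦ ?_
  · refine (Submodule.mem_dualAnnihilator _).2 fun v hv ↦ ?_
    exact hu (j + 1) (by omega) (by omega) v <|
      Submodule.mem_sup_right (hG (by simpa using hij) hv)
  · refine hne (i + 1) (by omega) (by omega) <|
      LinearMap.ext_on_codisjoint (g := 0) (hEG (i + 1) (by omega) (by omega)) (fun v hv ↦ ?_)
        ((Submodule.mem_dualAnnihilator _).1 hi)
    exact hu (i + 1) (by omega) (by omega) v (Submodule.mem_sup_left hv)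

theorem stmt6_general [FiniteDimensional K V] {d : ℕ} (hd : finrank K V = d)
    {L : Submodule K V} {E G : ℕ → Submodule K V} (hG : Monotone G) (hG₀ : G 0 = ⊥)
    (hL : ∀ i, 1 ≤ i → i ≤ d → IsCompl L (E (d - i) ⊔ G (i - 1)))
    (hEG : ∀ i, 1 ≤ i → i ≤ d → Codisjoint (E (d - i)) (G i))
    {u₁ : Dual K V} (hne : u₁ ≠ 0) (huE : ∀ v ∈ E (d - 1), u₁ v = 0) :
    (∃ u, u 1 = u₁ ∧ IsSnake L (fun i ↦ E (d - i) ⊔ G (i - 1)) d u) ∧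
    (∀ u u', u 1 = u₁ → IsSnake L (fun i ↦ E (d - i) ⊔ G (i - 1)) d u →
      u' 1 = u₁ → IsSnake L (fun i ↦ E (d - i) ⊔ G (i - 1)) d u' →
      ∀ i, 2 ≤ i → i ≤ d → u i = u' i) ∧
    (∀ u, u 1 = u₁ → IsSnake L (fun i ↦ E (d - i) ⊔ G (i - 1)) d u →
      (∀ i, 1 ≤ i → i ≤ d → u i ≠ 0) ∧
      LinearIndependent K (fun i : Fin d ↦ u (i + 1)) ∧
      Submodule.span K (Set.range fun i : Fin d ↦ u (i + 1)) = ⊤) := by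
  refine ⟨IsSnake.exists_of_isCompl (fun i hi ↦ hL i (by omega)) u₁,
    fun u u' h₁ hu h₁' hu' i hi hid ↦ IsSnake.eq_of_codisjoint
      (fun j hj hjd ↦ (hL j (by omega) hjd).codisjoint) hu hu' (h₁.trans h₁'.symm) (by omega) hid,
    ?_⟩
  rintro u rfl hu
  have hu₁ : ∀ v ∈ E (d - 1) ⊔ G (1 - 1), u 1 v = 0 := by simpa [hG₀] using huE
  have hu_ne : ∀ i, 1 ≤ i → i ≤ d → u i ≠ 0 := fun i ↦
    hu.ne_zero (fun j hj hjd ↦ (hL j hj hjd).codisjoint) hu₁ hne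
  have hli : LinearIndependent K fun i : Fin d ↦ u (i + 1) :=
    linearIndependent_of_eq_zero_on_sup hG hEG hu_ne fun i ↦ hu.apply_eq_zero hu₁
  exact ⟨hu_ne, hli,
    hli.span_eq_top_of_card_eq_finrank' (by simp [Subspace.dual_finrank_eq, hd])⟩

end Field

section Flag

variable {d : ℕ} {E F G : ℕ → Submodule ℝ (Vec d)}

theorem IsFlag.apply_zero (hF : IsFlag F) : F 0 = ⊥ :=
  Submodule.finrank_eq_zero.1 (hF.2 0 d.zero_le)

namespace MaxSpan

theorem iSup_eq_top {t : ℕ} {H : Fin t → ℕ → Submodule ℝ (Vec d)} (hH : MaxSpan H)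
    {a : Fin t → ℕ} (ha : ∀ j, a j ≤ d) (hd : d ≤ ∑ j, a j) : ⨆ j, H j (a j) = ⊤ :=
  Submodule.eq_top_of_finrank_eq <| by rw [hH a ha, min_eq_right hd, finrank_fin_fun]

theorem sup_eq_top (h : MaxSpan ![E, F, G]) {a b c : ℕ} (ha : a ≤ d) (hb : b ≤ d) (hc : c ≤ d)
    (hd : d ≤ a + b + c) : E a ⊔ F b ⊔ G c = ⊤ := by
  have htop := h.iSup_eq_top (a := ![a, b, c]) (by simp [Fin.forall_fin_succ, ha, hb, hc])
    (by simpa [Fin.sum_univ_three] using hd)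
  simpa [iSup_fin_three] using htop

theorem codisjoint (h : MaxSpan ![E, F, G]) (hF : IsFlag F) {i : ℕ} (hi : i ≤ d) :
    Codisjoint (E (d - i)) (G i) := by
  have htop := h.sup_eq_top (Nat.sub_le d i) d.zero_le hi (by omega)
  rwa [hF.apply_zero, sup_bot_eq, ← codisjoint_iff] at htop

theorem isCompl (h : MaxSpan ![E, F, G]) (hE : IsFlag E) (hF : IsFlag F) (hG : IsFlag G)
    {i : ℕ} (hi : 1 ≤ i) (hid : i ≤ d) : IsCompl (F 1) (E (d - i) ⊔ G (i - 1)) := by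
  apply isCompl_of_codisjoint_of_finrank_add_le
  · have htop := h.sup_eq_top (Nat.sub_le d i) (hi.trans hid) (c := i - 1) (by omega) (by omega)
    rwa [codisjoint_iff, sup_left_comm, ← sup_assoc]
  · have hsup := Submodule.finrank_add_le_finrank_add_finrank (E (d - i)) (G (i - 1))
    rw [hE.2 _ (by omega), hG.2 _ (by omega)] at hsup
    rw [hF.2 1 (by omega), finrank_fin_fun]
    omega

end MaxSpan

end Flag

/-- Existence, uniqueness and nondegeneracy of the snake basis: given a maximum
span triple of flags `(E,F,G)` and a nonzero functional `u₁` vanishing on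
`E^(d-1)`, there is a unique continuation `(u_2, …, u_d)` satisfying the snake
condition, each `u_i` is nonzero, and `(u_1, …, u_d)` is a basis of the dual
space `(ℝ^d)^*`. -/
theorem stmt6 {d : ℕ} (E F G : ℕ → Submodule ℝ (Vec d))
    (hE : IsFlag E) (hF : IsFlag F) (hG : IsFlag G)
    (hmax : MaxSpan ![E, F, G])
    (u1 : Module.Dual ℝ (Vec d)) (hu1 : u1 ≠ 0)
    (hu1E : ∀ v ∈ E (d - 1), u1 v = 0) :
    (∃ u : ℕ → Module.Dual ℝ (Vec d), u 1 = u1 ∧ SnakeCond E F G u) ∧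
    (∀ u u' : ℕ → Module.Dual ℝ (Vec d),
      u 1 = u1 → SnakeCond E F G u → u' 1 = u1 → SnakeCond E F G u' →
      ∀ i, 2 ≤ i → i ≤ d → u i = u' i) ∧
    (∀ u : ℕ → Module.Dual ℝ (Vec d), u 1 = u1 → SnakeCond E F G u →
      (∀ i, 1 ≤ i → i ≤ d → u i ≠ 0) ∧
      LinearIndependent ℝ (fun i : Fin d => u ((i : ℕ) + 1)) ∧
      Submodule.span ℝ (Set.range fun i : Fin d => u ((i : ℕ) + 1)) = ⊤) := by
  exact stmt6_general (finrank_fin_fun ℝ) hG.1 hG.apply_zero (fun _ ↦ hmax.isCompl hE hF hG)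
    (fun _ _ ↦ hmax.codisjoint hF) hu1 hu1E
end
end

section
/- Let (E,F,G) be a triple of flags in ℝ^d with the maximum span property, and let α, β, γ ≥ 0 be integers with α + β + γ = d − 1 and α ≥ 1. Consider the lines L = (E^(α)+F^(β)+G^(γ))^⊥, L' = (E^(α−1)+F^(β)+G^(γ+1))^⊥, and L'' = (E^(α−1)+F^(β+1)+G^(γ))^⊥ in the dual space (ℝ^d)^* (each is one-dimensional by the maximum span property). Then for every u ∈ L there exist unique u' ∈ L' and u'' ∈ L'' such that u + u' + u'' = 0. -/
/-!
For a multi-index `a`, let `S a` be the sum of the flag members `F_j^(a_j)`. Then `S` preserves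
joins, and by the maximum span property and the dimension formula `S b ∩ S c = S (b ∧ c)` as long
as `|b ∨ c| ≤ d`. If `|b ∨ c| = d`, then moreover `S b + S c` is the whole space. Dually, the
annihilators of `S b` and `S c` are then disjoint and sum to the annihilator of `S (b ∧ c)`, which
contains every functional vanishing on some `S a` with `b ∧ c ≤ a`.
-/

noncomputable section

theorem existsUnique_add_add_eq_zero_of_disjoint {R M : Type*} [Ring R] [AddCommGroup M]
    [Module R M] {P Q : Submodule R M} (hPQ : Disjoint P Q) {u : M} (hu : u ∈ P ⊔ Q) :
    ∃! p : M × M, p.1 ∈ P ∧ p.2 ∈ Q ∧ u + p.1 + p.2 = 0 := by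
  obtain ⟨x, hx, y, hy, rfl⟩ := Submodule.mem_sup.mp hu
  refine ⟨(-x, -y), ⟨neg_mem hx, neg_mem hy, by dsimp only; abel⟩, ?_⟩
  rintro ⟨p, q⟩ ⟨hp, hq, hsum⟩
  have hsum' : (x + p) + (y + q) = 0 := by rw [← hsum]; abel
  obtain ⟨hxp, hyq⟩ :=
    Submodule.disjoint_iff_add_eq_zero.mp hPQ (add_mem hx hp) (add_mem hy hq) hsum'
  exact Prod.ext (eq_neg_of_add_eq_zero_right hxp) (eq_neg_of_add_eq_zero_right hyq)

theorem disjoint_dualAnnihilator_of_codisjoint {R M : Type*} [CommSemiring R] [AddCommMonoid M]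
    [Module R M] {A B : Submodule R M} (h : Codisjoint A B) :
    Disjoint A.dualAnnihilator B.dualAnnihilator := by
  rw [disjoint_iff, ← Submodule.dualAnnihilator_sup_eq, h.eq_top, Submodule.dualAnnihilator_top]

theorem existsUnique_dualAnnihilator_add_add_eq_zero {K V : Type*} [Field K] [AddCommGroup V]
    [Module K V] {A B C : Submodule K V} (hAB : Codisjoint A B) (hC : A ⊓ B ≤ C)
    {u : Module.Dual K V} (hu : u ∈ C.dualAnnihilator) :
    ∃! p : Module.Dual K V × Module.Dual K V,
      p.1 ∈ A.dualAnnihilator ∧ p.2 ∈ B.dualAnnihilator ∧ u + p.1 + p.2 = 0 := by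
  apply existsUnique_add_add_eq_zero_of_disjoint (disjoint_dualAnnihilator_of_codisjoint hAB)
  rw [← Subspace.dualAnnihilator_inf_eq]
  exact Submodule.dualAnnihilator_anti hC hu

section FlagSpan

variable {ι R M : Type*} [Semiring R] [AddCommMonoid M] [Module R M]
  {F : ι → ℕ → Submodule R M}

/-- The sum `∑ j, F_j^(a_j)` of the members of a family of filtrations `F` (in particular, of
flags) selected by the multi-index `a`. -/
def flagSpan (F : ι → ℕ → Submodule R M) (a : ι → ℕ) : Submodule R M :=
  ⨆ j, F j (a j)

theorem flagSpan_mono (hF : ∀ j, Monotone (F j)) : Monotone (flagSpan F) :=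
  fun _ _ hab ↦ iSup_mono fun j ↦ hF j (hab j)

theorem flagSpan_sup (hF : ∀ j, Monotone (F j)) (a b : ι → ℕ) :
    flagSpan F (a ⊔ b) = flagSpan F a ⊔ flagSpan F b := by
  simp only [flagSpan, Pi.sup_apply, (hF _).map_sup, iSup_sup_eq]

theorem flagSpan_fin_three (E F G : ℕ → Submodule R M) (α β γ : ℕ) :
    flagSpan ![E, F, G] ![α, β, γ] = E α ⊔ F β ⊔ G γ :=
  iSup_fin_three

end FlagSpan

/-- The maximum span property for a finite family of filtrations of a module, with the rank of the
module as `d`; `MaxSpan` is the case of `ℝ^d`. -/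
def HasMaximalSpan {ι R M : Type*} [Fintype ι] [Semiring R] [AddCommMonoid M] [Module R M]
    (F : ι → ℕ → Submodule R M) : Prop :=
  ∀ a : ι → ℕ, (∀ j, a j ≤ Module.finrank R M) →
    Module.finrank R (flagSpan F a) = min (∑ j, a j) (Module.finrank R M)

theorem MaxSpan.hasMaximalSpan {d t : ℕ} {F : Fin t → ℕ → Submodule ℝ (Vec d)} (hF : MaxSpan F) :
    HasMaximalSpan F := by
  intro a ha
  simp only [Module.finrank_fin_fun] at ha ⊢
  exact hF a ha

namespace HasMaximalSpan

theorem finrank_flagSpan {ι R M : Type*} [Fintype ι] [Semiring R] [AddCommMonoid M] [Module R M]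
    {F : ι → ℕ → Submodule R M} {a : ι → ℕ} (hF : HasMaximalSpan F)
    (ha : ∑ j, a j ≤ Module.finrank R M) :
    Module.finrank R (flagSpan F a) = ∑ j, a j := by
  have ha_le (j : ι) : a j ≤ Module.finrank R M :=
    (Finset.single_le_sum_of_canonicallyOrdered (Finset.mem_univ j)).trans ha
  rw [hF a ha_le, min_eq_left ha]

variable {ι K V : Type*} [Fintype ι] [DivisionRing K] [AddCommGroup V] [Module K V]
  [FiniteDimensional K V] {F : ι → ℕ → Submodule K V} {a b : ι → ℕ}

theorem codisjoint_flagSpan (hF : HasMaximalSpan F) (hmono : ∀ j, Monotone (F j))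
    (hab : ∑ j, (a ⊔ b) j = Module.finrank K V) :
    Codisjoint (flagSpan F a) (flagSpan F b) := by
  rw [codisjoint_iff, ← flagSpan_sup hmono]
  exact Submodule.eq_top_of_finrank_eq ((hF.finrank_flagSpan hab.le).trans hab)

theorem flagSpan_inf (hF : HasMaximalSpan F) (hmono : ∀ j, Monotone (F j))
    (hab : ∑ j, (a ⊔ b) j ≤ Module.finrank K V) :
    flagSpan F (a ⊓ b) = flagSpan F a ⊓ flagSpan F b := by
  have finrank_of_le {c : ι → ℕ} (hc : c ≤ a ⊔ b) :
      Module.finrank K (flagSpan F c) = ∑ j, c j :=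
    hF.finrank_flagSpan ((Finset.sum_le_sum fun j _ ↦ hc j).trans hab)
  have hsum : ∑ j, (a ⊓ b) j + ∑ j, (a ⊔ b) j = ∑ j, a j + ∑ j, b j := by
    simp only [← Finset.sum_add_distrib, Pi.inf_apply, Pi.sup_apply, min_add_max]
  have hdim := Submodule.finrank_sup_add_finrank_inf_eq (flagSpan F a) (flagSpan F b)
  rw [← flagSpan_sup hmono, finrank_of_le le_rfl, finrank_of_le le_sup_left,
    finrank_of_le le_sup_right] at hdim
  apply Submodule.eq_of_le_of_finrank_eq ((flagSpan_mono hmono).map_inf_le a b)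
  rw [finrank_of_le (inf_le_left.trans le_sup_left)]
  lia

end HasMaximalSpan

theorem stmt7_general {ι K V : Type*} [Fintype ι] [Field K] [AddCommGroup V] [Module K V]
    [FiniteDimensional K V] {F : ι → ℕ → Submodule K V} (hmono : ∀ j, Monotone (F j))
    (hF : HasMaximalSpan F) {a b c : ι → ℕ} (hbc : b ⊓ c ≤ a)
    (hsum : ∑ j, (b ⊔ c) j = Module.finrank K V) :
    ∀ u ∈ (flagSpan F a).dualAnnihilator,
      ∃! p : Module.Dual K V × Module.Dual K V,
        p.1 ∈ (flagSpan F b).dualAnnihilator ∧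
        p.2 ∈ (flagSpan F c).dualAnnihilator ∧
        u + p.1 + p.2 = 0 := by
  have hinf : flagSpan F b ⊓ flagSpan F c ≤ flagSpan F a :=
    (hF.flagSpan_inf hmono hsum.le).symm.trans_le (flagSpan_mono hmono hbc)
  exact fun u ↦ existsUnique_dualAnnihilator_add_add_eq_zero
    (hF.codisjoint_flagSpan hmono hsum) hinf

/-- Lemma 2.9 (snake lemma): for a maximum span triple of flags `(E,F,G)` and
`α + β + γ = d - 1` with `α ≥ 1`, consider the lines
`L = (E^(α)+F^(β)+G^(γ))^⊥`, `L' = (E^(α-1)+F^(β)+G^(γ+1))^⊥`,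
`L'' = (E^(α-1)+F^(β+1)+G^(γ))^⊥` in `(ℝ^d)^*`. For every `u ∈ L` there exist
unique `u' ∈ L'` and `u'' ∈ L''` with `u + u' + u'' = 0`. -/
theorem stmt7 {d : ℕ} (E F G : ℕ → Submodule ℝ (Vec d))
    (hE : IsFlag E) (hF : IsFlag F) (hG : IsFlag G)
    (hmax : MaxSpan ![E, F, G])
    (α β γ : ℕ) (hα : 1 ≤ α) (hsum : α + β + γ = d - 1) :
    ∀ u ∈ (E α ⊔ F β ⊔ G γ).dualAnnihilator,
      ∃! p : Module.Dual ℝ (Vec d) × Module.Dual ℝ (Vec d),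
        p.1 ∈ (E (α - 1) ⊔ F β ⊔ G (γ + 1)).dualAnnihilator ∧
        p.2 ∈ (E (α - 1) ⊔ F (β + 1) ⊔ G γ).dualAnnihilator ∧
        u + p.1 + p.2 = 0 := by
  simp only [← flagSpan_fin_three]
  exact stmt7_general (by simp [Fin.forall_fin_succ, hE.1, hF.1, hG.1]) hmax.hasMaximalSpan
    (by simp [Pi.le_def, Fin.forall_fin_succ])
    (by simp only [Fin.sum_univ_three, Pi.sup_apply, Matrix.cons_val, Module.finrank_fin_fun]; lia)
end
end

section
/- Let (e_1,…,e_d) be the standard basis of ℝ^d and let (E,F,G,H) be a quadruple of flags in ℝ^d with the maximum span property such that E^(i) = span(e_1,…,e_i) and G^(i) = span(e_{d−i+1},…,e_d) for all i, F^(1) = span(e_1+e_2+⋯+e_d), and H^(1) = span(h_1e_1+h_2e_2+⋯+h_de_d) for some real numbers h_1,…,h_d not all zero. Then h_j ≠ 0 for every j = 1,…,d, and the double ratios satisfy Z_i(E,F,G,H) = −h_i/h_{i+1} for every 1 ≤ i ≤ d−1. -/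
noncomputable section

/-- The wedge product of the concatenated vectors, viewed as a real number via
`⋀^d ℝ^d ≅ ℝ` (determinant in the standard basis); junk value `0` if the total
number of vectors is not `d`. -/
def wedgeDet {d n1 n2 n3 : ℕ} (u : Fin n1 → Vec d) (v : Fin n2 → Vec d)
    (w : Fin n3 → Vec d) : ℝ :=
  if h : n1 + n2 + n3 = d then
    (Matrix.of fun i j => (Fin.append (Fin.append u v) w) (Fin.cast h.symm j) i).det
  else 0

/-- A choice, for each `k ≤ d`, of a spanning `k`-tuple of vectors of the member
`F k` of a flag; equivalently a choice of a nonzero element of `⋀^k F^(k)`. -/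
def ChoiceFor {d : ℕ} (F : ℕ → Submodule ℝ (Vec d)) (e : (k : ℕ) → Fin k → Vec d) : Prop :=
  ∀ k, k ≤ d → Submodule.span ℝ (Set.range (e k)) = F k

/-- The `i`-th double ratio `Z_i(E,F,G,H)` computed from choices. -/
def doubleRatio {d : ℕ} (i : ℕ) (e g : (k : ℕ) → Fin k → Vec d) (f1 h1 : Vec d) : ℝ :=
  -((wedgeDet (e i) (g (d-i-1)) ![f1] * wedgeDet (e (i-1)) (g (d-i)) ![h1]) /
    (wedgeDet (e i) (g (d-i-1)) ![h1] * wedgeDet (e (i-1)) (g (d-i)) ![f1]))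

/-- The span of the first `i` standard basis vectors of `ℝ^d`. -/
def stdFirst (d i : ℕ) : Submodule ℝ (Vec d) :=
  Submodule.span ℝ {v : Vec d | ∃ j : Fin d, (j : ℕ) < i ∧ v = Pi.single j 1}

/-- The span of the last `i` standard basis vectors of `ℝ^d`. -/
def stdLast (d i : ℕ) : Submodule ℝ (Vec d) :=
  Submodule.span ℝ {v : Vec d | ∃ j : Fin d, d - i ≤ (j : ℕ) ∧ v = Pi.single j 1}

/-!
Let `p + q + 1 = d`. The subspace `E^(p) + G^(q)` is spanned by all basis vectors except `e_{p+1}`,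
so it is the kernel of the coordinate with (zero-based) index `p`. The functional
`w ↦ e^(p) ∧ g^(q) ∧ w` vanishes exactly when `E^(p) + G^(q) + ℝw ≠ ℝ^d`, so it has the same kernel
and is a nonzero multiple of that coordinate. In a double ratio these multiples cancel, and only
coordinates of `F^(1)` and `H^(1)` remain. The maximum span property makes `E^(p) + G^(q) + H^(1)`
equal to `ℝ^d` for every `p`, so no coordinate of `h` vanishes.
-/

namespace MaxSpan

variable {d s t : ℕ} {F : Fin t → ℕ → Submodule ℝ (Vec d)}

theorem apply_zero (hF : MaxSpan F) (j : Fin t) : F j 0 = ⊥ := by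
  have hbot : ⨆ j, F j 0 = ⊥ := Submodule.finrank_eq_zero.1 <| by
    simpa using hF (fun _ => 0) fun _ => d.zero_le
  exact iSup_eq_bot.1 hbot j

theorem comp (hF : MaxSpan F) {σ : Fin s → Fin t} (hσ : σ.Injective) : MaxSpan (F ∘ σ) := by
  intro a ha
  let b : Fin t → ℕ := Function.extend σ a fun _ => 0
  have hbσ (i : Fin s) : b (σ i) = a i := hσ.extend_apply a _ i
  have hb0 (j : Fin t) (hj : j ∉ Set.range σ) : b j = 0 := Function.extend_apply' a _ j hj
  have hb (j : Fin t) : b j ≤ d := by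
    by_cases hj : j ∈ Set.range σ
    · obtain ⟨i, rfl⟩ := hj
      exact (hbσ i).trans_le (ha i)
    · exact (hb0 j hj).trans_le d.zero_le
  have hsum : ∑ i, a i = ∑ j, b j :=
    Fintype.sum_of_injective σ hσ a b hb0 fun i => (hbσ i).symm
  have hsup : ⨆ i, F (σ i) (a i) = ⨆ j, F j (b j) := by
    refine le_antisymm (iSup_le fun i => ?_) (iSup_le fun j => ?_)
    · exact hbσ i ▸ le_iSup (fun j => F j (b j)) (σ i)
    · by_cases hj : j ∈ Set.range σ
      · obtain ⟨i, rfl⟩ := hj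
        exact hbσ i ▸ le_iSup (fun i => F (σ i) (a i)) i
      · simp [hb0 j hj, hF.apply_zero]
  rw [hsum, ← hF b hb, ← hsup]
  rfl

theorem sup_sup_eq_top (hF : MaxSpan F) {i j k : Fin t} (hijk : Function.Injective ![i, j, k])
    {p q r : ℕ} (hd : p + q + r = d) : F i p ⊔ F j q ⊔ F k r = ⊤ := by
  have hsum : ∑ l, ![p, q, r] l = d := by
    rwa [Fin.sum_univ_three]
  have hle (l : Fin 3) : ![p, q, r] l ≤ d :=
    (Finset.single_le_sum_of_canonicallyOrdered (Finset.mem_univ l)).trans_eq hsum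
  have hrank := hF.comp hijk ![p, q, r] hle
  rw [iSup_fin_three, hsum, min_self] at hrank
  exact Submodule.eq_top_of_finrank_eq (hrank.trans (Module.finrank_fin_fun ℝ).symm)

end MaxSpan

theorem ker_sup_span_singleton_eq_top_iff {K V : Type*} [Field K] [AddCommGroup V] [Module K V]
    {φ : V →ₗ[K] K} (hφ : φ ≠ 0) {v : V} :
    LinearMap.ker φ ⊔ Submodule.span K {v} = ⊤ ↔ φ v ≠ 0 := by
  refine ⟨fun htop hv => hφ ?_, fun hv => ?_⟩
  · have hle : Submodule.span K {v} ≤ LinearMap.ker φ :=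
      (Submodule.span_singleton_le_iff_mem v _).2 hv
    exact LinearMap.ker_eq_top.1 (sup_eq_left.2 hle ▸ htop)
  · rw [sup_comm, φ.span_singleton_sup_ker_eq_top hv]

theorem span_range_append {R V : Type*} [Semiring R] [AddCommMonoid V] [Module R V]
    {m n : ℕ} (u : Fin m → V) (v : Fin n → V) :
    Submodule.span R (Set.range (Fin.append u v)) =
      Submodule.span R (Set.range u) ⊔ Submodule.span R (Set.range v) := by
  rw [← EquivLike.range_comp (Fin.append u v) finSumFinEquiv, ← Submodule.span_union,
    ← Set.Sum.elim_range, ← Fin.append_comp_sumElim]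
  rfl

section StandardFlags

variable {d q : ℕ} {j : Fin d}

theorem stdFirst_sup_stdLast_eq_ker_proj (hq : j + q + 1 = d) :
    stdFirst d j ⊔ stdLast d q = LinearMap.ker (LinearMap.proj j : Vec d →ₗ[ℝ] ℝ) := by
  refine le_antisymm (sup_le ?_ ?_) fun w hw => ?_
  · refine Submodule.span_le.2 ?_
    rintro _ ⟨k, hk, rfl⟩
    exact Pi.single_eq_of_ne (Fin.ne_of_gt hk) 1
  · refine Submodule.span_le.2 ?_
    rintro _ ⟨k, hk, rfl⟩
    exact Pi.single_eq_of_ne (Fin.ne_of_val_ne (by omega)) 1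
  · have hsum : ∑ k, w k • (Pi.single k 1 : Vec d) = w := by
      simpa using (Pi.basisFun ℝ (Fin d)).sum_repr w
    rw [← hsum]
    refine Submodule.sum_mem _ fun k _ => ?_
    rcases lt_trichotomy k j with hk | rfl | hk
    · exact Submodule.smul_mem _ _ <| Submodule.mem_sup_left <|
        Submodule.subset_span ⟨k, hk, rfl⟩
    · have hwk : w k = 0 := hw
      simp [hwk]
    · exact Submodule.smul_mem _ _ <| Submodule.mem_sup_right <|
        Submodule.subset_span ⟨k, by omega, rfl⟩

theorem stdFirst_sup_stdLast_sup_span_singleton_eq_top_iff (hq : j + q + 1 = d) {w : Vec d} :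
    stdFirst d j ⊔ stdLast d q ⊔ Submodule.span ℝ {w} = ⊤ ↔ w j ≠ 0 := by
  have hproj : (LinearMap.proj j : Vec d →ₗ[ℝ] ℝ) ≠ 0 := fun h0 => by
    simpa using LinearMap.congr_fun h0 (Pi.single j 1)
  rw [stdFirst_sup_stdLast_eq_ker_proj hq, ker_sup_span_singleton_eq_top_iff hproj,
    LinearMap.proj_apply]

theorem MaxSpan.coord_ne_zero {t : ℕ} {F : Fin t → ℕ → Submodule ℝ (Vec d)} (hF : MaxSpan F)
    {a b c : Fin t} (habc : Function.Injective ![a, b, c])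
    (ha : ∀ i ≤ d, F a i = stdFirst d i) (hb : ∀ i ≤ d, F b i = stdLast d i)
    {w : Vec d} (hc : F c 1 = Submodule.span ℝ {w}) (j : Fin d) : w j ≠ 0 := by
  have hd : j + (d - 1 - j) + 1 = d := by omega
  rw [← stdFirst_sup_stdLast_sup_span_singleton_eq_top_iff hd, ← ha _ (by omega),
    ← hb _ (by omega), ← hc]
  exact hF.sup_sup_eq_top habc hd

end StandardFlags

section WedgeDet

variable {d m n r : ℕ}

theorem wedgeDet_eq_detRowAlternating (hd : m + n + r = d) (u : Fin m → Vec d) (v : Fin n → Vec d)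
    (w : Fin r → Vec d) :
    wedgeDet u v w =
      Matrix.detRowAlternating (Fin.append (Fin.append u v) w ∘ Fin.cast hd.symm) := by
  rw [wedgeDet, dif_pos hd, ← Matrix.det_transpose]
  rfl

theorem wedgeDet_ne_zero_iff (hd : m + n + r = d) {u : Fin m → Vec d} {v : Fin n → Vec d}
    {w : Fin r → Vec d} :
    wedgeDet u v w ≠ 0 ↔ Submodule.span ℝ (Set.range u) ⊔ Submodule.span ℝ (Set.range v) ⊔
      Submodule.span ℝ (Set.range w) = ⊤ := by
  subst hd
  rw [wedgeDet_eq_detRowAlternating rfl, ← span_range_append, ← span_range_append,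
    ← isUnit_iff_ne_zero, ← Pi.basisFun_det, Fin.cast_refl, Function.comp_id,
    ← Module.Basis.is_basis_iff_det]
  exact and_iff_right_of_imp fun hspan =>
    linearIndependent_of_top_le_span_of_card_eq_finrank hspan.ge (by simp)

theorem isLinearMap_wedgeDet (u : Fin m → Vec d) (v : Fin n → Vec d) :
    IsLinearMap ℝ fun w => wedgeDet u v ![w] := by
  by_cases hd : m + n + 1 = d
  · subst hd
    have hcurry (w : Vec (m + n + 1)) : wedgeDet u v ![w] =
        Matrix.detRowAlternating.toMultilinearMap.curryRight (Fin.append u v) w := by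
      rw [wedgeDet_eq_detRowAlternating rfl, Fin.append_right_eq_snoc]
      rfl
    simpa only [hcurry] using LinearMap.isLinear _
  · simp only [wedgeDet, dif_neg hd]
    exact (0 : Vec d →ₗ[ℝ] ℝ).isLinear

end WedgeDet

section DoubleRatio

variable {d q : ℕ} {j : Fin d} {u : Fin j → Vec d} {v : Fin q → Vec d}

theorem wedgeDet_ne_zero_iff_coord_ne_zero (hq : j + q + 1 = d)
    (hu : Submodule.span ℝ (Set.range u) = stdFirst d j)
    (hv : Submodule.span ℝ (Set.range v) = stdLast d q) {w : Vec d} :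
    wedgeDet u v ![w] ≠ 0 ↔ w j ≠ 0 := by
  rw [wedgeDet_ne_zero_iff hq, hu, hv, Matrix.range_cons, Matrix.range_empty, Set.union_empty,
    stdFirst_sup_stdLast_sup_span_singleton_eq_top_iff hq]

theorem exists_wedgeDet_eq_mul_coord (hq : j + q + 1 = d)
    (hu : Submodule.span ℝ (Set.range u) = stdFirst d j)
    (hv : Submodule.span ℝ (Set.range v) = stdLast d q) :
    ∃ c : ℝ, c ≠ 0 ∧ ∀ w : Vec d, wedgeDet u v ![w] = c * w j := by
  let c := wedgeDet u v ![Pi.single j 1]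
  have hzero (w : Vec d) : wedgeDet u v ![w] ≠ 0 ↔ w j ≠ 0 :=
    wedgeDet_ne_zero_iff_coord_ne_zero hq hu hv
  have hc : c ≠ 0 := (hzero _).2 (by simp)
  have hker : LinearMap.ker (isLinearMap_wedgeDet u v).mk' =
      LinearMap.ker (c • LinearMap.proj j) := by
    ext w
    simpa [hc] using not_iff_not.1 (hzero w)
  have heq := Module.Dual.eq_of_ker_eq_of_apply_eq (Pi.single j 1) hker (by simp [c]) hc
  exact ⟨c, hc, fun w => LinearMap.congr_fun heq w⟩

theorem doubleRatio_eq_neg_div {e g : (k : ℕ) → Fin k → Vec d} (he : ChoiceFor (stdFirst d) e)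
    (hg : ChoiceFor (stdLast d) g) {i : ℕ} (hi1 : 1 ≤ i) (hi2 : i < d) (x y : Vec d) :
    doubleRatio i e g x y =
      -((x ⟨i, hi2⟩ * y ⟨i - 1, Nat.sub_lt_of_lt hi2⟩) /
        (y ⟨i, hi2⟩ * x ⟨i - 1, Nat.sub_lt_of_lt hi2⟩)) := by
  obtain ⟨b, hb, hwedge⟩ := exists_wedgeDet_eq_mul_coord (j := ⟨i, hi2⟩)
    (show i + (d - i - 1) + 1 = d by omega) (he i (by omega)) (hg (d - i - 1) (by omega))
  obtain ⟨c, hc, hwedge'⟩ := exists_wedgeDet_eq_mul_coord (j := ⟨i - 1, Nat.sub_lt_of_lt hi2⟩)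
    (show i - 1 + (d - i) + 1 = d by omega) (he (i - 1) (by omega)) (hg (d - i) (by omega))
  simp only [doubleRatio, hwedge, hwedge']
  field_simp

end DoubleRatio

theorem stmt8_general {d : ℕ} {E F G H : ℕ → Submodule ℝ (Vec d)} (hmax : MaxSpan ![E, F, G, H])
    (hE : ∀ i ≤ d, E i = stdFirst d i) (hG : ∀ i ≤ d, G i = stdLast d i) {f h : Vec d}
    (hF : F 1 = Submodule.span ℝ {f}) (hH : H 1 = Submodule.span ℝ {h}) :
    (∀ j, f j ≠ 0) ∧ (∀ j, h j ≠ 0) ∧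
    ∀ i : ℕ, 1 ≤ i → ∀ hi2 : i < d,
      ∀ (e g : (k : ℕ) → Fin k → Vec d) (f1 h1 : Vec d),
        ChoiceFor E e → ChoiceFor G g →
        f1 ∈ F 1 → f1 ≠ 0 → h1 ∈ H 1 → h1 ≠ 0 →
        doubleRatio i e g f1 h1 =
          -((f ⟨i, hi2⟩ * h ⟨i - 1, Nat.sub_lt_of_lt hi2⟩) /
            (f ⟨i - 1, Nat.sub_lt_of_lt hi2⟩ * h ⟨i, hi2⟩)) := by
  refine ⟨hmax.coord_ne_zero (a := 0) (b := 2) (c := 1) (by decide) hE hG hF,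
    hmax.coord_ne_zero (a := 0) (b := 2) (c := 3) (by decide) hE hG hH, ?_⟩
  intro i hi1 hi2 e g f1 h1 he hg hf1 hf0 hh1 hh0
  rw [hF] at hf1
  rw [hH] at hh1
  obtain ⟨a, rfl⟩ := Submodule.mem_span_singleton.1 hf1
  obtain ⟨b, rfl⟩ := Submodule.mem_span_singleton.1 hh1
  have ha : a ≠ 0 := left_ne_zero_of_smul hf0
  have hb : b ≠ 0 := left_ne_zero_of_smul hh0
  rw [doubleRatio_eq_neg_div (fun k hk => (he k hk).trans (hE k hk))
    (fun k hk => (hg k hk).trans (hG k hk)) hi1 hi2]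
  simp only [Pi.smul_apply, smul_eq_mul]
  field_simp

/-- Computation in the proof of Proposition 2.14: for the normalized quadruple
of flags with `E^(i) = span(e_1,…,e_i)`, `G^(i) = span(e_{d-i+1},…,e_d)`,
`F^(1) = span(e_1+⋯+e_d)` and `H^(1) = span(h_1e_1+⋯+h_de_d)`, every `h_j` is
nonzero and `Z_i(E,F,G,H) = -h_i/h_{i+1}`. -/
theorem stmt8 {d : ℕ} (E F G H : ℕ → Submodule ℝ (Vec d))
    (hE : IsFlag E) (hF : IsFlag F) (hG : IsFlag G) (hH : IsFlag H)
    (hmax : MaxSpan ![E, F, G, H])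
    (hEstd : ∀ i, i ≤ d → E i = stdFirst d i)
    (hGstd : ∀ i, i ≤ d → G i = stdLast d i)
    (hFstd : F 1 = Submodule.span ℝ {((fun _ => 1) : Vec d)})
    (h : Fin d → ℝ) (hne : h ≠ 0)
    (hHstd : H 1 = Submodule.span ℝ {(h : Vec d)}) :
    (∀ j : Fin d, h j ≠ 0) ∧
    ∀ i : ℕ, ∀ hi1 : 1 ≤ i, ∀ hi2 : i < d,
      ∀ (e g : (k : ℕ) → Fin k → Vec d) (f1 h1 : Vec d),
        ChoiceFor E e → ChoiceFor G g →
        f1 ∈ F 1 → f1 ≠ 0 → h1 ∈ H 1 → h1 ≠ 0 →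
        doubleRatio i e g f1 h1 =
          -(h ⟨i - 1, by omega⟩ / h ⟨i, by omega⟩) := by
  obtain ⟨-, hh, hratio⟩ := stmt8_general hmax hEstd hGstd hFstd hHstd
  exact ⟨hh, by simpa only [one_mul] using hratio⟩
end
end

section
/- Let (E,F,G) be a triple of flags in ℝ^d with the maximum span property, and let (e_1,…,e_d) be the standard basis of ℝ^d. Then there exists g ∈ GL(d,ℝ) such that g·E^(i) = span(e_1,…,e_i) and g·G^(i) = span(e_{d−i+1},…,e_d) for all 0 ≤ i ≤ d, and g·F^(1) = span(e_1+e_2+⋯+e_d). -/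
noncomputable section

/-!
The flags `E` and `G` are opposite, so each `E^(j+1) ∩ G^(d-j)` contains a nonzero vector, outside
`E^(j)`; such vectors form a basis, and they span the steps of both flags. A generator of `F^(1)`
lies in none of the hyperplanes `E^(j) + G^(d-j-1)`, so all its coordinates are nonzero. Scaling
the basis by these coordinates turns it into `(1, …, 1)` and keeps the basis in the same
intersections.
-/

open Module Submodule

section DivisionRing

variable {K V : Type*} [DivisionRing K] [AddCommGroup V] [Module K V]

theorem linearIndependent_of_mem_succ_of_notMem {E : ℕ → Submodule K V} (hE : Monotone E) {d : ℕ}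
    {w : Fin d → V} (hmem : ∀ j : Fin d, w j ∈ E (j + 1)) (hnot : ∀ j : Fin d, w j ∉ E j) :
    LinearIndependent K w := by
  induction d with
  | zero => exact linearIndependent_empty_type
  | succ n ih =>
    refine linearIndependent_finSucc'.mpr
      ⟨ih (fun j => hmem j.castSucc) (fun j => hnot j.castSucc), fun hlast => ?_⟩
    have hinit : span K (Set.range (Fin.init w)) ≤ E n := by
      rw [span_le]
      rintro _ ⟨j, rfl⟩
      exact hE j.isLt (hmem j.castSucc)
    exact hnot (Fin.last n) (hinit hlast)

theorem card_filter_sub_le_val {d i : ℕ} (hi : i ≤ d) :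
    (Finset.univ.filter fun j : Fin d => d - i ≤ (j : ℕ)).card = i := by
  have hsplit := Finset.card_filter_add_card_filter_not (s := Finset.univ)
    (fun j : Fin d => (j : ℕ) < d - i)
  simp only [not_lt, Fin.card_filter_val_lt, Finset.card_univ, Fintype.card_fin] at hsplit
  omega

theorem exists_mem_inf_ne_zero_of_finrank_lt [FiniteDimensional K V] {W₁ W₂ : Submodule K V}
    (hlt : finrank K V < finrank K W₁ + finrank K W₂) : ∃ w ∈ W₁ ⊓ W₂, w ≠ 0 :=
  exists_mem_ne_zero_of_ne_bot fun hbot =>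
    hlt.not_ge (finrank_add_finrank_le_of_disjoint (disjoint_iff.mpr hbot))

section Basis

variable {ι : Type*} [Fintype ι] (b : Basis ι K V)

theorem span_basis_subfamily_eq {p : ι → Prop} [DecidablePred p] {W : Submodule K V}
    (hmem : ∀ j, p j → b j ∈ W) (hcard : finrank K W = (Finset.univ.filter p).card) :
    span K {x | ∃ j, p j ∧ x = b j} = W := by
  have : FiniteDimensional K V := b.finiteDimensional_of_finite
  have hrange : {x | ∃ j, p j ∧ x = b j} = Set.range fun j : Subtype p => b j := by
    ext x
    simp [eq_comm]
  refine eq_of_le_of_finrank_eq ?_ ?_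
  · rw [span_le]
    rintro _ ⟨j, hj, rfl⟩
    exact hmem j hj
  · rw [hrange, hcard, ← Fintype.card_subtype]
    exact finrank_span_eq_card (b.linearIndependent.comp _ Subtype.val_injective)

theorem map_equivFun_eq_span_single [DecidableEq ι] {p : ι → Prop} [DecidablePred p]
    {W : Submodule K V} (hmem : ∀ j, p j → b j ∈ W)
    (hcard : finrank K W = (Finset.univ.filter p).card) :
    W.map (b.equivFun : V →ₗ[K] ι → K) = span K {x | ∃ j, p j ∧ x = Pi.single j 1} := by
  have himage : (b.equivFun : V →ₗ[K] ι → K) '' {x | ∃ j, p j ∧ x = b j} =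
      {x | ∃ j, p j ∧ x = Pi.single j 1} := by
    ext x
    simp [Set.mem_image, ← Finsupp.single_eq_pi_single, eq_comm]
  rw [← span_basis_subfamily_eq b hmem hcard, map_span, himage]

end Basis

theorem repr_ne_zero_of_notMem {ι : Type*} (b : Basis ι K V) {W : Submodule K V} {k : ι}
    (hW : ∀ j ≠ k, b j ∈ W) {v : V} (hv : v ∉ W) : b.repr v k ≠ 0 := by
  intro hk
  have hspan : span K (b '' (b.repr v).support) ≤ W := by
    rw [span_le]
    rintro _ ⟨j, hj, rfl⟩
    exact hW j fun hjk => Finsupp.mem_support_iff.mp hj (hjk ▸ hk)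
  exact hv (hspan (b.mem_span_repr_support v))

/-- A complete flag in a `d`-dimensional space, encoded as a monotone `ℕ`-indexed family whose
dimensions are prescribed up to the index `d` only. -/
structure IsCompleteFlag (d : ℕ) (F : ℕ → Submodule K V) : Prop where
  monotone : Monotone F
  finrank_eq : ∀ i ≤ d, finrank K (F i) = i

/-- Opposite flags in a `d`-dimensional space. Only disjointness is required: for complete flags
the dimensions then make `E i` and `G (d - i)` complementary. -/
def AreOpposite (d : ℕ) (E G : ℕ → Submodule K V) : Prop :=
  ∀ i ≤ d, Disjoint (E i) (G (d - i))

section OppositeFlags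

variable {d : ℕ} {E G : ℕ → Submodule K V}

theorem AreOpposite.linearIndependent (hEG : AreOpposite d E G) (hE : Monotone E) {w : Fin d → V}
    (hw : ∀ j : Fin d, w j ∈ E (j + 1) ⊓ G (d - j)) (hw0 : ∀ j, w j ≠ 0) :
    LinearIndependent K w :=
  linearIndependent_of_mem_succ_of_notMem hE (fun j => (hw j).1) fun j hj =>
    hw0 j (disjoint_def.mp (hEG j j.isLt.le) _ hj (hw j).2)

theorem mem_sup_of_mem_inf_of_ne (hE : Monotone E) (hG : Monotone G) {w : Fin d → V}
    (hw : ∀ j : Fin d, w j ∈ E (j + 1) ⊓ G (d - j)) {j k : Fin d} (hjk : j ≠ k) :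
    w j ∈ E k ⊔ G (d - (k + 1)) := by
  rcases lt_or_gt_of_ne hjk with hlt | hgt
  · exact mem_sup_left (hE (Nat.succ_le_of_lt hlt) (hw j).1)
  · exact mem_sup_right (hG (Nat.sub_le_sub_left (Nat.succ_le_of_lt hgt) d) (hw j).2)

variable [FiniteDimensional K V]

theorem AreOpposite.exists_basis (hEG : AreOpposite d E G) (hd : finrank K V = d)
    (hE : Monotone E) {w : Fin d → V} (hw : ∀ j : Fin d, w j ∈ E (j + 1) ⊓ G (d - j))
    (hw0 : ∀ j, w j ≠ 0) : ∃ b : Basis (Fin d) K V, ⇑b = w :=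
  ⟨_, coe_basisOfLinearIndependentOfCardEqFinrank' _ (hEG.linearIndependent hE hw hw0)
    (by rw [Fintype.card_fin, hd])⟩

theorem AreOpposite.exists_basis_sum_eq (hEG : AreOpposite d E G) (hd : finrank K V = d)
    (hE : IsCompleteFlag d E) (hG : IsCompleteFlag d G) {v : V}
    (hv : ∀ i < d, v ∉ E i ⊔ G (d - (i + 1))) :
    ∃ b : Basis (Fin d) K V, (∀ j : Fin d, b j ∈ E (j + 1) ⊓ G (d - j)) ∧ ∑ j, b j = v := by
  have hlt (j : Fin d) : finrank K V < finrank K (E (j + 1)) + finrank K (G (d - j)) := by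
    rw [hd, hE.finrank_eq _ (by omega), hG.finrank_eq _ (by omega)]
    omega
  choose w hw hw0 using fun j => exists_mem_inf_ne_zero_of_finrank_lt (hlt j)
  obtain ⟨b, rfl⟩ := hEG.exists_basis hd hE.monotone hw hw0
  have hcoord (j : Fin d) : b.repr v j ≠ 0 :=
    repr_ne_zero_of_notMem b (fun _ => mem_sup_of_mem_inf_of_ne hE.monotone hG.monotone hw)
      (hv j j.isLt)
  have hscaled (j : Fin d) : b.repr v j • b j ∈ E (j + 1) ⊓ G (d - j) := smul_mem _ _ (hw j)
  obtain ⟨b', hb'⟩ := hEG.exists_basis hd hE.monotone hscaled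
    fun j => smul_ne_zero (hcoord j) (hw0 j)
  exact ⟨b', fun j => congr_fun hb' j ▸ hscaled j, by simp only [hb', b.sum_repr]⟩

theorem stmt9_general (hd : finrank K V = d) (hE : IsCompleteFlag d E) (hG : IsCompleteFlag d G)
    (hEG : AreOpposite d E G) {L : Submodule K V} (hL : L.IsPrincipal)
    (hLEG : ∀ i < d, ¬ L ≤ E i ⊔ G (d - (i + 1))) :
    ∃ T : V ≃ₗ[K] (Fin d → K),
      (∀ i ≤ d,
        (E i).map (T : V →ₗ[K] Fin d → K) =
          span K {x | ∃ j : Fin d, (j : ℕ) < i ∧ x = Pi.single j 1} ∧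
        (G i).map (T : V →ₗ[K] Fin d → K) =
          span K {x | ∃ j : Fin d, d - i ≤ (j : ℕ) ∧ x = Pi.single j 1}) ∧
      L.map (T : V →ₗ[K] Fin d → K) = span K {fun _ => 1} := by
  obtain ⟨v, rfl⟩ := hL
  simp only [span_singleton_le_iff_mem] at hLEG
  obtain ⟨b, hb, rfl⟩ := hEG.exists_basis_sum_eq hd hE hG hLEG
  refine ⟨b.equivFun, fun i hi => ⟨?_, ?_⟩, ?_⟩
  · refine map_equivFun_eq_span_single b (fun j hj => hE.monotone hj (hb j).1) ?_
    rw [hE.finrank_eq i hi, Fin.card_filter_val_lt, min_eq_right hi]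
  · refine map_equivFun_eq_span_single b (fun j hj => hG.monotone (by omega) (hb j).2) ?_
    rw [hG.finrank_eq i hi, card_filter_sub_le_val hi]
  · have hsum : b.equivFun (∑ j, b j) = fun _ => 1 := by
      rw [← b.equivFun.apply_symm_apply fun _ => 1, b.equivFun_symm_apply]
      simp only [one_smul]
    rw [map_span, Set.image_singleton, LinearEquiv.coe_coe, hsum]

end OppositeFlags

end DivisionRing

section MaxSpan

variable {d : ℕ} {E F G : ℕ → Submodule ℝ (Vec d)}

theorem IsFlag.finrank_le (hF : IsFlag F) (i : ℕ) : finrank ℝ (F i) ≤ i := by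
  rcases le_total i d with hi | hi
  · exact (hF.2 i hi).le
  · exact (F i).finrank_le.trans (by simpa using hi)

theorem MaxSpan.finrank_sup (hmax : MaxSpan ![E, F, G]) {a b c : ℕ} (ha : a ≤ d) (hb : b ≤ d)
    (hc : c ≤ d) : finrank ℝ ↥(E a ⊔ F b ⊔ G c) = min (a + b + c) d := by
  have hsup := hmax ![a, b, c] (by simp [Fin.forall_fin_succ, ha, hb, hc])
  rwa [iSup_fin_three, Fin.sum_univ_three] at hsup

theorem MaxSpan.finrank_sup_outer (hmax : MaxSpan ![E, F, G]) (hF : IsFlag F) {a c : ℕ}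
    (ha : a ≤ d) (hc : c ≤ d) : finrank ℝ ↥(E a ⊔ G c) = min (a + c) d := by
  have hF0 : F 0 = ⊥ := finrank_eq_zero.mp (hF.2 0 d.zero_le)
  have hdim := hmax.finrank_sup ha d.zero_le hc
  rwa [hF0, sup_bot_eq, add_zero] at hdim

theorem MaxSpan.areOpposite (hmax : MaxSpan ![E, F, G]) (hE : IsFlag E) (hF : IsFlag F)
    (hG : IsFlag G) : AreOpposite d E G := by
  intro i hi
  have hdim := finrank_sup_add_finrank_inf_eq (E i) (G (d - i))
  rw [hmax.finrank_sup_outer hF hi (d.sub_le i), hE.2 i hi, hG.2 _ (d.sub_le i)] at hdim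
  exact disjoint_iff.mpr (finrank_eq_zero.mp (by omega))

theorem MaxSpan.not_le_sup (hmax : MaxSpan ![E, F, G]) (hF : IsFlag F) {i : ℕ} (hi : i < d) :
    ¬ F 1 ≤ E i ⊔ G (d - (i + 1)) := by
  intro hle
  have hdim := hmax.finrank_sup hi.le (by omega : 1 ≤ d) (d.sub_le (i + 1))
  rw [sup_right_comm, sup_eq_left.mpr hle, hmax.finrank_sup_outer hF hi.le (d.sub_le (i + 1))]
    at hdim
  omega

end MaxSpan

/-- Normalization in the proof of Proposition 2.14: every maximum span triple of
flags `(E,F,G)` can be moved by an element `g ∈ GL(d,ℝ)` to the standard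
position `g·E^(i) = span(e_1,…,e_i)`, `g·G^(i) = span(e_{d-i+1},…,e_d)` and
`g·F^(1) = span(e_1+⋯+e_d)`. -/
theorem stmt9 {d : ℕ} (E F G : ℕ → Submodule ℝ (Vec d))
    (hE : IsFlag E) (hF : IsFlag F) (hG : IsFlag G)
    (hmax : MaxSpan ![E, F, G]) :
    ∃ T : Vec d ≃ₗ[ℝ] Vec d,
      (∀ i, i ≤ d →
        (E i).map (T : Vec d →ₗ[ℝ] Vec d) = stdFirst d i ∧
        (G i).map (T : Vec d →ₗ[ℝ] Vec d) = stdLast d i) ∧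
      (F 1).map (T : Vec d →ₗ[ℝ] Vec d) =
        Submodule.span ℝ {((fun _ => 1) : Vec d)} := by
  exact stmt9_general (finrank_fin_fun ℝ) ⟨hE.1, hE.2⟩ ⟨hG.1, hG.2⟩ (hmax.areOpposite hE hF hG)
    (finrank_le_one_iff_isPrincipal _ |>.mp (hF.finrank_le 1)) fun _ => hmax.not_le_sup hF
end
end
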